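/- arXiv:2007.03332 — 5 statements merged into one kernel-verified Lean document; each statement's English description precedes it below -/
import Mathlib

section
/- Let n ∈ ℕ, r ∈ ℕ₀ and let C ⊆ ℝⁿ × ℝ be simple. If (y₀,…,y_r) is an r-logarithmic scale on C with center (Θ₀,…,Θ_r), then Θ_j vanishes identically on π(C) for every j ∈ {0,…,r}; consequently C admits at most one r-logarithmic scale, namely the one with identically vanishing center. (Proposition 2.19: an r-simple set is r-elementary and r-unique.) -/
/-!
Statement 0 (Proposition 2.19): if `C ⊆ ℝⁿ × ℝ` is simple, then the center of any
`r`-logarithmic scale on `C` vanishes identically on `π(C)`; consequently `C` admits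
at most one `r`-logarithmic scale.
-/

/-- `C` is simple: every nonempty fiber `C_x` is an interval `(0, d_x)` with
`d_x ∈ (0, +∞]` (modelled as an extended real). -/
def IsSimple {n : ℕ} (C : Set ((Fin n → ℝ) × ℝ)) : Prop :=
  ∀ x : Fin n → ℝ, (∃ y : ℝ, (x, y) ∈ C) →
    ∃ d : EReal, 0 < d ∧ ∀ y : ℝ, ((x, y) ∈ C ↔ 0 < y ∧ (y : EReal) < d)

/-- `(Y 0, …, Y r)` is an `r`-logarithmic scale on `C` with center `(Θ 0, …, Θ r)`. -/
structure IsLogScale (n r : ℕ) (C : Set ((Fin n → ℝ) × ℝ))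
    (Θ : ℕ → (Fin n → ℝ) → ℝ) (Y : ℕ → ((Fin n → ℝ) × ℝ) → ℝ) : Prop where
  base : ∀ p ∈ C, Y 0 p = p.2 - Θ 0 p.1
  step : ∀ j : ℕ, 1 ≤ j → j ≤ r → ∀ p ∈ C, Y j p = Real.log (|Y (j - 1) p|) - Θ j p.1
  sign : ∀ j : ℕ, j ≤ r → (∀ p ∈ C, 0 < Y j p) ∨ (∀ p ∈ C, Y j p < 0)
  center0 : (∀ x ∈ Prod.fst '' C, Θ 0 x = 0) ∨
    ∃ ε ∈ Set.Ioo (0 : ℝ) 1, ∀ p ∈ C, |Y 0 p| < ε * |p.2|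
  centerSucc : ∀ j : ℕ, 1 ≤ j → j ≤ r →
    ((∀ x ∈ Prod.fst '' C, Θ j x = 0) ∨
      ∃ ε ∈ Set.Ioo (0 : ℝ) 1, ∀ p ∈ C, |Y j p| < ε * |Real.log (|Y (j - 1) p|)|)

/-!
Suppose `Θ 0, …, Θ (j - 1)` vanish at `x`. Then `y_j = log^[j] y - Θ j x` on the fiber over `x`, so
a nonzero `Θ j x` would have to satisfy `|log^[j] y - Θ j x| < ε * |log^[j] y|` for some `ε < 1` and
all `y` in the fiber, which accumulates at `0`.
As `y → 0`, this contradicts `log^[0] y → 0` when `j = 0` and `|log^[j] y| → ∞` when `0 < j`.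
-/

open Bornology Filter Topology

section Norm

variable {E : Type*} [SeminormedAddCommGroup E]

theorem eventually_mul_norm_le_norm_sub_nhds_zero {c : E} (hc : ‖c‖ ≠ 0) (ε : ℝ) :
    ∀ᶠ z in 𝓝 (0 : E), ε * ‖z‖ ≤ ‖z - c‖ := by
  have hlt : ε * ‖(0 : E)‖ < ‖0 - c‖ := by simpa using hc.symm.lt_of_le (norm_nonneg c)
  have hleft : ContinuousAt (fun z : E => ε * ‖z‖) 0 := by fun_prop
  have hright : ContinuousAt (fun z : E => ‖z - c‖) 0 := by fun_prop
  exact (hleft.eventually_lt hright hlt).mono fun _ => le_of_lt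

theorem eventually_mul_norm_le_norm_sub_cobounded (c : E) {ε : ℝ} (hε : ε < 1) :
    ∀ᶠ z in cobounded E, ε * ‖z‖ ≤ ‖z - c‖ := by
  filter_upwards [eventually_cobounded_le_norm (‖c‖ / (1 - ε))] with z hz
  have hc : ‖c‖ ≤ ‖z‖ * (1 - ε) := (div_le_iff₀ (sub_pos.2 hε)).1 hz
  calc
    ε * ‖z‖ ≤ ‖z‖ - ‖c‖ := by linarith
    _ ≤ ‖z - c‖ := norm_sub_norm_le z c

end Norm

theorem tendsto_log_cobounded_cobounded :
    Tendsto Real.log (cobounded ℝ) (cobounded ℝ) := by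
  have hlog : Tendsto (fun z : ℝ => Real.log ‖z‖) (cobounded ℝ) atTop :=
    Real.tendsto_log_atTop.comp tendsto_norm_cobounded_atTop
  simp only [Real.norm_eq_abs, Real.log_abs] at hlog
  exact hlog.mono_right IsOrderBornology.atTop_le_cobounded

theorem tendsto_iterate_log_nhdsNE_zero_cobounded (k : ℕ) :
    Tendsto Real.log^[k + 1] (𝓝[≠] 0) (cobounded ℝ) :=
  (tendsto_log_cobounded_cobounded.iterate k).comp
    (Real.tendsto_log_nhdsNE_zero.mono_right IsOrderBornology.atBot_le_cobounded)

theorem eventually_mul_abs_iterate_log_le_abs_sub (k : ℕ) {c ε : ℝ} (hc : c ≠ 0) (hε : ε < 1) :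
    ∀ᶠ y in 𝓝[≠] (0 : ℝ), ε * |Real.log^[k] y| ≤ |Real.log^[k] y - c| := by
  cases k with
  | zero =>
    exact (eventually_mul_norm_le_norm_sub_nhds_zero (norm_ne_zero_iff.2 hc) ε).filter_mono
      nhdsWithin_le_nhds
  | succ k =>
    exact (tendsto_iterate_log_nhdsNE_zero_cobounded k).eventually
      (eventually_mul_norm_le_norm_sub_cobounded c hε)

theorem IsSimple.accPt_zero {n : ℕ} {C : Set ((Fin n → ℝ) × ℝ)} (hC : IsSimple C)
    {x : Fin n → ℝ} (hx : x ∈ Prod.fst '' C) : AccPt 0 (𝓟 {y : ℝ | (x, y) ∈ C}) := by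
  obtain ⟨⟨x, y₀⟩, hy₀, rfl⟩ := hx
  obtain ⟨d, -, hfiber⟩ := hC x ⟨y₀, hy₀⟩
  obtain ⟨hy₀_pos, hy₀_lt⟩ := (hfiber y₀).1 hy₀
  have hmem : ∀ᶠ y : ℝ in 𝓝[>] 0, (x, y) ∈ C := by
    filter_upwards [Ioo_mem_nhdsGT hy₀_pos] with y hy
    exact (hfiber y).2 ⟨hy.1, (EReal.coe_lt_coe hy.2).trans hy₀_lt⟩
  exact accPt_iff_frequently_nhdsNE.2 (hmem.frequently.filter_mono (nhdsGT_le_nhdsNE 0))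

namespace IsLogScale

variable {n r j : ℕ} {C : Set ((Fin n → ℝ) × ℝ)} {Θ : ℕ → (Fin n → ℝ) → ℝ}
  {Y : ℕ → ((Fin n → ℝ) × ℝ) → ℝ} {p : (Fin n → ℝ) × ℝ} {x : Fin n → ℝ}

theorem eq_iterate_log (h : IsLogScale n r C Θ Y) (hj : j ≤ r) (hp : p ∈ C)
    (hΘ : ∀ i ≤ j, Θ i p.1 = 0) : Y j p = Real.log^[j] p.2 := by
  induction j with
  | zero => rw [h.base p hp, hΘ 0 le_rfl, sub_zero, Function.iterate_zero_apply]
  | succ j ih =>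
    have hprev : Y j p = Real.log^[j] p.2 := ih (by lia) fun i hi => hΘ i (by lia)
    rw [h.step (j + 1) (by lia) hj p hp, hΘ (j + 1) le_rfl, sub_zero, Nat.add_sub_cancel,
      Real.log_abs, hprev, Function.iterate_succ_apply']

theorem center_eq_zero_or_abs_sub_lt (h : IsLogScale n r C Θ Y) (hj : j ≤ r)
    (hx : x ∈ Prod.fst '' C) (hΘ : ∀ i < j, Θ i x = 0) :
    Θ j x = 0 ∨ ∃ ε < 1, ∀ y, (x, y) ∈ C →
      |Real.log^[j] y - Θ j x| < ε * |Real.log^[j] y| := by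
  cases j with
  | zero =>
    refine h.center0.imp (· x hx) ?_
    rintro ⟨ε, hε, hlt⟩
    refine ⟨ε, hε.2, fun y hy => ?_⟩
    simpa only [h.base _ hy, Function.iterate_zero_apply] using hlt _ hy
  | succ j =>
    refine (h.centerSucc (j + 1) (by lia) hj).imp (· x hx) ?_
    rintro ⟨ε, hε, hlt⟩
    refine ⟨ε, hε.2, fun y hy => ?_⟩
    have hprev : Y j (x, y) = Real.log^[j] y :=
      h.eq_iterate_log (by lia) hy fun i hi => hΘ i (by lia)
    simpa only [h.step (j + 1) (by lia) hj _ hy, Nat.add_sub_cancel, Real.log_abs, hprev,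
      ← Function.iterate_succ_apply' Real.log] using hlt _ hy

theorem center_eq_zero (h : IsLogScale n r C Θ Y) (hx : AccPt 0 (𝓟 {y : ℝ | (x, y) ∈ C}))
    (hj : j ≤ r) : Θ j x = 0 := by
  have hfreq : ∃ᶠ y in 𝓝[≠] (0 : ℝ), (x, y) ∈ C := accPt_iff_frequently_nhdsNE.1 hx
  obtain ⟨y₀, hy₀⟩ := hfreq.exists
  induction j using Nat.strong_induction_on with
  | h j ih =>
    by_contra hne
    obtain ⟨ε, hε, hlt⟩ := (h.center_eq_zero_or_abs_sub_lt hj ⟨_, hy₀, rfl⟩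
      fun i hi => ih i hi (by lia)).resolve_left hne
    obtain ⟨y, hy, hle⟩ :=
      (hfreq.and_eventually (eventually_mul_abs_iterate_log_le_abs_sub j hne hε)).exists
    exact (hlt y hy).not_ge hle

end IsLogScale

theorem center_vanishes_and_unique_of_simple_general {n r : ℕ} (C : Set ((Fin n → ℝ) × ℝ))
    (hC : ∀ x ∈ Prod.fst '' C, AccPt 0 (𝓟 {y : ℝ | (x, y) ∈ C}))
    (Θ : ℕ → (Fin n → ℝ) → ℝ) (Y : ℕ → ((Fin n → ℝ) × ℝ) → ℝ) (h : IsLogScale n r C Θ Y) :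
    (∀ j ≤ r, ∀ x ∈ Prod.fst '' C, Θ j x = 0) ∧
      ∀ (Θ' : ℕ → (Fin n → ℝ) → ℝ) (Y' : ℕ → ((Fin n → ℝ) × ℝ) → ℝ),
        IsLogScale n r C Θ' Y' →
          (∀ j ≤ r, ∀ x ∈ Prod.fst '' C, Θ' j x = Θ j x) ∧
          (∀ j ≤ r, ∀ p ∈ C, Y' j p = Y j p) := by
  have hzero {Θ Y} (h : IsLogScale n r C Θ Y) : ∀ j ≤ r, ∀ x ∈ Prod.fst '' C, Θ j x = 0 :=
    fun _ hj x hx => h.center_eq_zero (hC x hx) hj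
  have hiterate {Θ Y} (h : IsLogScale n r C Θ Y) :
      ∀ j ≤ r, ∀ p ∈ C, Y j p = Real.log^[j] p.2 :=
    fun _ hj p hp => h.eq_iterate_log hj hp fun i hi => hzero h i (hi.trans hj) p.1 ⟨p, hp, rfl⟩
  exact ⟨hzero h, fun Θ' Y' h' =>
    ⟨fun j hj x hx => (hzero h' j hj x hx).trans (hzero h j hj x hx).symm,
      fun j hj p hp => (hiterate h' j hj p hp).trans (hiterate h j hj p hp).symm⟩⟩

/-- Proposition 2.19: on a simple set every `r`-logarithmic scale has identically
vanishing center on `π(C)`, and the scale is unique. -/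
theorem center_vanishes_and_unique_of_simple {n r : ℕ} (C : Set ((Fin n → ℝ) × ℝ))
    (hC : IsSimple C) (Θ : ℕ → (Fin n → ℝ) → ℝ) (Y : ℕ → ((Fin n → ℝ) × ℝ) → ℝ)
    (h : IsLogScale n r C Θ Y) :
    (∀ j ≤ r, ∀ x ∈ Prod.fst '' C, Θ j x = 0) ∧
      ∀ (Θ' : ℕ → (Fin n → ℝ) → ℝ) (Y' : ℕ → ((Fin n → ℝ) × ℝ) → ℝ),
        IsLogScale n r C Θ' Y' →
          (∀ j ≤ r, ∀ x ∈ Prod.fst '' C, Θ' j x = Θ j x) ∧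
          (∀ j ≤ r, ∀ p ∈ C, Y' j p = Y j p) :=
  center_vanishes_and_unique_of_simple_general C (fun _ => hC.accPt_zero) Θ Y h
end

section
/- Let n ∈ ℕ, r ∈ ℕ₀ and let C ⊆ ℝⁿ × ℝ be simple. Suppose (y₀,…,y_r) is an r-logarithmic scale on C whose center vanishes identically. Then: (1) sup C_x ≤ 1/e_r for all x ∈ π(C); (2) y₀(x,y) = y, y₁(x,y) = log y, and y_j(x,y) = log_{j−1}(−log y) for j ∈ {2,…,r}; (3) the sign vector (sign(y₀),…,sign(y_r)) equals (+1,−1,+1,…,+1). (Proposition 2.17.) -/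
/-!
Statement 1 (Proposition 2.17): for a simple set `C` and an `r`-logarithmic scale on `C`
with identically vanishing center:
(1) `sup C_x ≤ 1/e_r` for all `x ∈ π(C)` (with the convention `1/e₀ = 1/0 = +∞`;
    since `C_x` is an open interval `(0, d_x)`, this is equivalent to `y * e_r ≤ 1`
    for all `y ∈ C_x`);
(2) `y₀ = y`, `y₁ = log y`, `y_j = log_{j-1}(-log y)` for `2 ≤ j ≤ r`;
(3) the sign vector is `(+1, -1, +1, …, +1)`.
-/

/-- iterated logarithm: `iterLog 0 t = t`, `iterLog (k+1) t = log (iterLog k t)`. -/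
noncomputable def iterLog : ℕ → ℝ → ℝ
  | 0, t => t
  | k + 1, t => Real.log (iterLog k t)

/-- `ee 0 = 0`, `ee (r+1) = exp (ee r)`. -/
noncomputable def ee : ℕ → ℝ
  | 0 => 0
  | r + 1 => Real.exp (ee r)

/-!
Since `Real.log` is even, a scale with vanishing center is the sequence of iterated logarithms of
`y`, and from index `2` on one may replace `log y` by `-log y`. Near `y = 0⁺` one has `y > 0`,
`log y < 0` and `log_k (-log y) > 0` for every `k`. As the signs are constant and `y` takes
arbitrarily small positive values, these signs hold everywhere. Finally, positivity of
`log_0 t, …, log_k t` amounts to `e_k < t`; for `t = -log y` this reads `y * e_{k+1} < 1`.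
-/

open Filter Topology Real

theorem iterLog_succ_eq_iterLog_log (k : ℕ) (t : ℝ) : iterLog (k + 1) t = iterLog k (log t) := by
  induction k with
  | zero => rfl
  | succ k ih => exact congrArg log ih

theorem iterLog_succ_neg (k : ℕ) (t : ℝ) : iterLog (k + 1) (-t) = iterLog (k + 1) t := by
  simp only [iterLog_succ_eq_iterLog_log, log_neg_eq_log]

theorem forall_iterLog_pos_iff_ee_lt (k : ℕ) (t : ℝ) :
    (∀ i ≤ k, 0 < iterLog i t) ↔ ee k < t := by
  induction k generalizing t with
  | zero => simp [iterLog, ee]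
  | succ k ih =>
    calc (∀ i ≤ k + 1, 0 < iterLog i t)
        ↔ 0 < t ∧ ∀ i ≤ k, 0 < iterLog i (log t) := by
          simp only [← Nat.lt_succ_iff]
          rw [Nat.forall_lt_succ_left]
          simp only [iterLog_succ_eq_iterLog_log]
          rfl
      _ ↔ 0 < t ∧ ee k < log t := and_congr_right fun _ ↦ ih (log t)
      _ ↔ 0 < t ∧ ee (k + 1) < t := and_congr_right fun ht ↦ lt_log_iff_exp_lt ht
      _ ↔ ee (k + 1) < t := and_iff_right_of_imp (exp_pos (ee k)).trans

theorem mul_ee_succ_lt_one_iff {y : ℝ} (hy : 0 < y) (k : ℕ) :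
    y * ee (k + 1) < 1 ↔ ee k < -log y := by
  rw [lt_neg, log_lt_iff_lt_exp hy, exp_neg, ← one_div, lt_div_iff₀ (exp_pos _), ee]

theorem eventually_iterLog_neg_log_pos (k : ℕ) : ∀ᶠ y in 𝓝[>] (0 : ℝ), 0 < iterLog k (-log y) := by
  have hlog : Tendsto (fun y ↦ -log y) (𝓝[>] 0) atTop :=
    tendsto_neg_atBot_atTop.comp tendsto_log_nhdsGT_zero
  filter_upwards [hlog.eventually_gt_atTop (ee k)] with y hy
  exact (forall_iterLog_pos_iff_ee_lt k _).2 hy k le_rfl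

theorem forall_pos_of_frequently_of_eventually {α β : Type*} {C : Set α} {g : α → β} {f : β → ℝ}
    {l : Filter β} (hsign : (∀ p ∈ C, 0 < f (g p)) ∨ ∀ p ∈ C, f (g p) < 0)
    (hfreq : ∃ᶠ b in l, b ∈ g '' C) (hpos : ∀ᶠ b in l, 0 < f b) : ∀ p ∈ C, 0 < f (g p) := by
  obtain ⟨_, ⟨q, hq, rfl⟩, hfq⟩ := (hfreq.and_eventually hpos).exists
  exact hsign.resolve_right fun hneg ↦ (hneg q hq).not_gt hfq

/-- A logarithmic scale whose center vanishes identically, along a function `y` on an arbitrary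
set `C`; for a scale on a subset of `ℝⁿ × ℝ`, `y` is the projection to the last coordinate. The
`Y j` with `j > r` are unconstrained. -/
structure IsElementaryLogScale {α : Type*} (r : ℕ) (C : Set α) (y : α → ℝ) (Y : ℕ → α → ℝ) :
    Prop where
  zero : ∀ p ∈ C, Y 0 p = y p
  succ : ∀ j < r, ∀ p ∈ C, Y (j + 1) p = log |Y j p|
  sign : ∀ j ≤ r, (∀ p ∈ C, 0 < Y j p) ∨ ∀ p ∈ C, Y j p < 0

namespace IsElementaryLogScale

variable {α : Type*} {r : ℕ} {C : Set α} {y : α → ℝ} {Y : ℕ → α → ℝ} {p : α}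

theorem eq_iterLog (h : IsElementaryLogScale r C y Y) (hp : p ∈ C) {j : ℕ} (hj : j ≤ r) :
    Y j p = iterLog j (y p) := by
  induction j with
  | zero => exact h.zero p hp
  | succ j ih => rw [h.succ j hj p hp, log_abs, ih (Nat.le_of_succ_le hj), iterLog]

theorem one_eq_log (h : IsElementaryLogScale r C y Y) (hp : p ∈ C) (hr : 1 ≤ r) :
    Y 1 p = log (y p) :=
  h.eq_iterLog hp hr

theorem eq_iterLog_neg_log (h : IsElementaryLogScale r C y Y) (hp : p ∈ C) {j : ℕ} (hj : 2 ≤ j)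
    (hjr : j ≤ r) : Y j p = iterLog (j - 1) (-log (y p)) := by
  obtain ⟨k, rfl⟩ := Nat.exists_eq_add_of_le' hj
  rw [h.eq_iterLog hp hjr, iterLog_succ_eq_iterLog_log, ← iterLog_succ_neg]
  rfl

theorem pos (h : IsElementaryLogScale r C y Y) (hC : ∃ᶠ t in 𝓝[>] 0, t ∈ y '' C) :
    ∀ p ∈ C, 0 < y p := by
  have hsign : (∀ p ∈ C, 0 < y p) ∨ ∀ p ∈ C, y p < 0 := by
    simpa +contextual only [h.zero] using h.sign 0 r.zero_le
  exact forall_pos_of_frequently_of_eventually (f := id) hsign hC self_mem_nhdsWithin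

theorem iterLog_neg_log_pos (h : IsElementaryLogScale r C y Y)
    (hC : ∃ᶠ t in 𝓝[>] 0, t ∈ y '' C) {k : ℕ} (hk : k < r) :
    ∀ p ∈ C, 0 < iterLog k (-log (y p)) := by
  suffices hsign : (∀ p ∈ C, 0 < iterLog k (-log (y p))) ∨ ∀ p ∈ C, iterLog k (-log (y p)) < 0 from
    forall_pos_of_frequently_of_eventually (f := fun t ↦ iterLog k (-log t)) hsign hC
      (eventually_iterLog_neg_log_pos k)
  rcases k with _ | k
  · refine (h.sign 1 hk).symm.imp (fun hneg p hp ↦ ?_) fun hpos p hp ↦ ?_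
    · exact neg_pos.2 (h.one_eq_log hp hk ▸ hneg p hp)
    · exact neg_neg_iff_pos.2 (h.one_eq_log hp hk ▸ hpos p hp)
  · have heq : ∀ p ∈ C, Y (k + 2) p = iterLog (k + 1) (-log (y p)) := fun p hp ↦
      h.eq_iterLog_neg_log hp (Nat.le_add_left 2 k) hk
    simpa +contextual only [heq] using h.sign (k + 2) hk

theorem mul_ee_lt_one (h : IsElementaryLogScale r C y Y) (hC : ∃ᶠ t in 𝓝[>] 0, t ∈ y '' C)
    (hp : p ∈ C) : y p * ee r < 1 := by
  rcases r with _ | k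
  · simp [ee]
  · rw [mul_ee_succ_lt_one_iff (h.pos hC p hp), ← forall_iterLog_pos_iff_ee_lt]
    exact fun i hi ↦ h.iterLog_neg_log_pos hC (Nat.lt_succ_of_le hi) p hp

end IsElementaryLogScale

theorem IsLogScale.isElementaryLogScale {n r : ℕ} {C : Set ((Fin n → ℝ) × ℝ)}
    {Θ : ℕ → (Fin n → ℝ) → ℝ} {Y : ℕ → ((Fin n → ℝ) × ℝ) → ℝ} (h : IsLogScale n r C Θ Y)
    (hcenter : ∀ j ≤ r, ∀ x ∈ Prod.fst '' C, Θ j x = 0) :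
    IsElementaryLogScale r C Prod.snd Y where
  zero p hp := by
    rw [h.base p hp, hcenter 0 r.zero_le p.1 (Set.mem_image_of_mem _ hp), sub_zero]
  succ j hj p hp := by
    rw [h.step (j + 1) j.succ_pos hj p hp, hcenter (j + 1) hj p.1 (Set.mem_image_of_mem _ hp),
      sub_zero, Nat.add_sub_cancel]
  sign := h.sign

theorem IsSimple.eventually_mem {n : ℕ} {C : Set ((Fin n → ℝ) × ℝ)} (hC : IsSimple C)
    {x : Fin n → ℝ} {y : ℝ} (hxy : (x, y) ∈ C) : ∀ᶠ z in 𝓝[>] 0, (x, z) ∈ C := by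
  obtain ⟨d, -, hd⟩ := hC x ⟨y, hxy⟩
  obtain ⟨hy, hyd⟩ := (hd y).1 hxy
  filter_upwards [Ioo_mem_nhdsGT hy] with z hz
  exact (hd z).2 ⟨hz.1, (EReal.coe_lt_coe hz.2).trans hyd⟩

theorem IsSimple.frequently_mem_image_snd {n : ℕ} {C : Set ((Fin n → ℝ) × ℝ)} (hC : IsSimple C)
    (hne : C.Nonempty) : ∃ᶠ y in 𝓝[>] 0, y ∈ Prod.snd '' C := by
  obtain ⟨⟨x, y⟩, hxy⟩ := hne
  exact ((hC.eventually_mem hxy).mono fun z hz ↦ ⟨(x, z), hz, rfl⟩).frequently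

theorem elementary_scale_on_simple_set_general {α : Type*} {r : ℕ} {C : Set α} {y : α → ℝ}
    {Y : ℕ → α → ℝ} (hC : C.Nonempty → ∃ᶠ t in 𝓝[>] 0, t ∈ y '' C)
    (h : IsElementaryLogScale r C y Y) :
    (∀ p ∈ C, y p * ee r ≤ 1) ∧
    (∀ p ∈ C, Y 0 p = y p ∧ (1 ≤ r → Y 1 p = log (y p)) ∧
      (∀ j : ℕ, 2 ≤ j → j ≤ r → Y j p = iterLog (j - 1) (-log (y p)))) ∧
    ((∀ p ∈ C, 0 < Y 0 p) ∧ (1 ≤ r → ∀ p ∈ C, Y 1 p < 0) ∧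
      (∀ j : ℕ, 2 ≤ j → j ≤ r → ∀ p ∈ C, 0 < Y j p)) := by
  refine ⟨fun p hp ↦ (h.mul_ee_lt_one (hC ⟨p, hp⟩) hp).le,
    fun p hp ↦ ⟨h.zero p hp, h.one_eq_log hp, fun j ↦ h.eq_iterLog_neg_log hp⟩,
    fun p hp ↦ ?_, fun hr p hp ↦ ?_, fun j hj hjr p hp ↦ ?_⟩
  · rw [h.zero p hp]
    exact h.pos (hC ⟨p, hp⟩) p hp
  · rw [h.one_eq_log hp hr]
    exact neg_pos.1 (h.iterLog_neg_log_pos (hC ⟨p, hp⟩) hr p hp)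
  · rw [h.eq_iterLog_neg_log hp hj hjr]
    exact h.iterLog_neg_log_pos (hC ⟨p, hp⟩) (by lia) p hp

/-- Proposition 2.17. -/
theorem elementary_scale_on_simple_set {n r : ℕ} (C : Set ((Fin n → ℝ) × ℝ))
    (hC : IsSimple C) (Θ : ℕ → (Fin n → ℝ) → ℝ) (Y : ℕ → ((Fin n → ℝ) × ℝ) → ℝ)
    (h : IsLogScale n r C Θ Y)
    (hcenter : ∀ j ≤ r, ∀ x ∈ Prod.fst '' C, Θ j x = 0) :
    -- (1) `sup C_x ≤ 1/e_r` for all `x ∈ π(C)`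
    (∀ p ∈ C, p.2 * ee r ≤ 1) ∧
    -- (2) explicit form of the scale
    (∀ p ∈ C, Y 0 p = p.2 ∧ (1 ≤ r → Y 1 p = Real.log p.2) ∧
      (∀ j : ℕ, 2 ≤ j → j ≤ r → Y j p = iterLog (j - 1) (-Real.log p.2))) ∧
    -- (3) the sign vector is `(+1, -1, +1, …, +1)`
    ((∀ p ∈ C, 0 < Y 0 p) ∧ (1 ≤ r → ∀ p ∈ C, Y 1 p < 0) ∧
      (∀ j : ℕ, 2 ≤ j → j ≤ r → ∀ p ∈ C, 0 < Y j p)) :=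
  elementary_scale_on_simple_set_general hC.frequently_mem_image_snd
    (h.isElementaryLogScale hcenter)
end

section
/- Let n ∈ ℕ, r ∈ ℕ₀ and let C ⊆ ℝⁿ × ℝ be simple. Then the following are equivalent: (i) there exists an r-logarithmic scale on C; (ii) sup C_x ≤ 1/e_r for every x ∈ π(C). (Corollary 2.20.) -/
/-!
Along a fibre `y → 0⁺` every iterated logarithm of `y` is unbounded from the first one on, so the
smallness condition on a nonzero center fails near `0`; hence all centers vanish and `Y j` is the
`j`-fold iterated logarithm of `y`. Its constant sign must be the one it has near `0⁺`: negative for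
`j = 1` and positive otherwise. For `0 < y` and `w = -log y` these sign conditions up to `r + 1` say
that `w, log w, …, log^[r] w` are all positive, and unwinding the logarithms from the innermost
one outwards, this is `ee r < w`, i.e. `y * ee (r + 1) < 1`. The fibres being open at their upper
end, the strict inequality is the same as the weak one on a simple set.

Since `Real.log x = log |x|`, the plain iterates `Real.log^[j]` already are the iterated logarithms
with absolute values.
-/

open Filter Topology Bornology

section SmallCenter

variable {E : Type*}

theorem eventually_nhds_zero_mul_norm_lt_norm_sub [NormedAddCommGroup E] {c : E} (hc : c ≠ 0)
    (ε : ℝ) : ∀ᶠ y in 𝓝 0, ε * ‖y‖ < ‖y - c‖ :=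
  ContinuousAt.eventually_lt (by fun_prop) (by fun_prop) (by simpa using hc)

theorem eventually_cobounded_mul_norm_lt_norm_sub [SeminormedAddCommGroup E] (c : E) {ε : ℝ}
    (hε : ε < 1) : ∀ᶠ y in cobounded E, ε * ‖y‖ < ‖y - c‖ := by
  filter_upwards [tendsto_norm_cobounded_atTop.eventually_gt_atTop (‖c‖ / (1 - ε))] with y hy
  rw [div_lt_iff₀ (sub_pos.2 hε)] at hy
  linarith [norm_sub_norm_le y c]

end SmallCenter

theorem forall_pos_or_forall_neg_iff {α R : Type*} [Zero R] [LinearOrder R] {s : Set α}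
    {f : α → R} :
    ((∀ a ∈ s, 0 < f a) ∨ ∀ a ∈ s, f a < 0) ↔
      ∃ σ : SignType, σ ≠ 0 ∧ ∀ a ∈ s, SignType.sign (f a) = σ := by
  simp only [← sign_eq_one_iff, ← sign_eq_neg_one_iff]
  constructor
  · rintro (h | h)
    exacts [⟨1, by decide, h⟩, ⟨-1, by decide, h⟩]
  · rintro ⟨_ | _ | _, hσ, h⟩
    exacts [absurd rfl hσ, .inr h, .inl h]

section IteratedLog

theorem tendsto_log_cobounded_atTop : Tendsto Real.log (cobounded ℝ) atTop := by
  simpa only [Function.comp_def, Real.norm_eq_abs, Real.log_abs] using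
    Real.tendsto_log_atTop.comp (tendsto_norm_cobounded_atTop (E := ℝ))

theorem tendsto_iterate_log_nhdsGT_zero_cobounded (j : ℕ) :
    Tendsto Real.log^[j + 1] (𝓝[>] 0) (cobounded ℝ) :=
  ((tendsto_log_cobounded_atTop.mono_right IsOrderBornology.atTop_le_cobounded).iterate j).comp
    (Real.tendsto_log_nhdsGT_zero.mono_right IsOrderBornology.atBot_le_cobounded)

/-- The sign of the `j`-fold iterated logarithm on a right neighbourhood of `0`. -/
def iterateLogSign : ℕ → SignType
  | 1 => -1
  | _ => 1

theorem iterateLogSign_ne_zero : ∀ j, iterateLogSign j ≠ 0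
  | 0 | 1 | _ + 2 => by simp [iterateLogSign]

theorem eventually_sign_iterate_log_eq (j : ℕ) :
    ∀ᶠ y in 𝓝[>] (0 : ℝ), SignType.sign (Real.log^[j] y) = iterateLogSign j := by
  match j with
  | 0 => exact eventually_mem_nhdsWithin.mono fun y hy => sign_pos hy
  | 1 => exact (Real.tendsto_log_nhdsGT_zero.eventually_lt_atBot 0).mono fun y hy => sign_neg hy
  | j + 2 =>
    have h : Tendsto Real.log^[j + 2] (𝓝[>] 0) atTop := by
      rw [Function.iterate_succ']
      exact tendsto_log_cobounded_atTop.comp (tendsto_iterate_log_nhdsGT_zero_cobounded j)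
    exact (h.eventually_gt_atTop 0).mono fun y hy => sign_pos hy

theorem sign_iterate_log_succ_eq_iff (j : ℕ) (y : ℝ) :
    SignType.sign (Real.log^[j + 1] y) = iterateLogSign (j + 1) ↔
      0 < Real.log^[j] (-Real.log y) := by
  cases j with
  | zero => simp [iterateLogSign, sign_eq_neg_one_iff]
  | succ j => simp [iterateLogSign, sign_eq_one_iff, Function.iterate_succ_apply]

theorem forall_le_add_one_iff {P : ℕ → Prop} {k : ℕ} :
    (∀ j ≤ k + 1, P j) ↔ P 0 ∧ ∀ j ≤ k, P (j + 1) := by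
  simp only [← Nat.lt_add_one_iff, Nat.forall_lt_succ_left]

theorem ee_lt_iff_forall_iterate_log_pos (k : ℕ) (w : ℝ) :
    ee k < w ↔ ∀ j ≤ k, 0 < Real.log^[j] w := by
  induction k generalizing w with
  | zero => simp [ee]
  | succ k ih =>
    have hexp : Real.exp (ee k) < w ↔ 0 < w ∧ ee k < Real.log w :=
      ⟨fun h => ⟨(Real.exp_pos _).trans h, (Real.lt_log_iff_exp_lt ((Real.exp_pos _).trans h)).2 h⟩,
        fun h => (Real.lt_log_iff_exp_lt h.1).1 h.2⟩
    rw [ee, hexp, ih, forall_le_add_one_iff]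
    rfl

theorem mul_exp_lt_one_iff {y : ℝ} (hy : 0 < y) (a : ℝ) :
    y * Real.exp a < 1 ↔ a < -Real.log y := by
  rw [← lt_div_iff₀ (Real.exp_pos a), one_div, ← Real.exp_neg, ← Real.log_lt_iff_lt_exp hy,
    lt_neg]

theorem forall_sign_iterate_log_eq_iff (r : ℕ) (y : ℝ) :
    (∀ j ≤ r, SignType.sign (Real.log^[j] y) = iterateLogSign j) ↔ 0 < y ∧ y * ee r < 1 := by
  cases r with
  | zero => simp [ee, iterateLogSign, sign_eq_one_iff]
  | succ r =>
    simp only [forall_le_add_one_iff, sign_iterate_log_succ_eq_iff,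
      ← ee_lt_iff_forall_iterate_log_pos]
    exact and_congr sign_eq_one_iff Iff.rfl |>.trans <|
      and_congr_right fun hy => (mul_exp_lt_one_iff hy _).symm

end IteratedLog

namespace IsLogScale

variable {n r : ℕ} {C : Set ((Fin n → ℝ) × ℝ)} {Θ : ℕ → (Fin n → ℝ) → ℝ}
  {Y : ℕ → ((Fin n → ℝ) × ℝ) → ℝ} {x : Fin n → ℝ}

theorem center_zero_eq_zero (H : IsLogScale n r C Θ Y)
    (hx : ∃ᶠ y in 𝓝[>] 0, (x, y) ∈ C) : Θ 0 x = 0 := by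
  rcases H.center0 with hΘ | ⟨ε, -, hsmall⟩
  · obtain ⟨y, hy⟩ := hx.exists
    exact hΘ x ⟨(x, y), hy, rfl⟩
  · by_contra hne
    have hlarge : ∀ᶠ y in 𝓝[>] 0, ε * ‖y‖ < ‖y - Θ 0 x‖ :=
      (eventually_nhds_zero_mul_norm_lt_norm_sub hne ε).filter_mono nhdsWithin_le_nhds
    obtain ⟨y, hyC, hy⟩ := (hx.and_eventually hlarge).exists
    have hy' := hsmall _ hyC
    rw [H.base _ hyC] at hy'
    exact lt_asymm hy hy'

theorem apply_succ (H : IsLogScale n r C Θ Y) {j : ℕ} (hj : j + 1 ≤ r) {p : (Fin n → ℝ) × ℝ}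
    (hp : p ∈ C) : Y (j + 1) p = Real.log (Y j p) - Θ (j + 1) p.1 := by
  simpa using H.step (j + 1) (by lia) hj p hp

theorem center_succ_eq_zero (H : IsLogScale n r C Θ Y) {j : ℕ} (hj : j + 1 ≤ r)
    (hx : ∃ᶠ y in 𝓝[>] 0, (x, y) ∈ C) (hY : ∀ y, (x, y) ∈ C → Y j (x, y) = Real.log^[j] y) :
    Θ (j + 1) x = 0 := by
  rcases H.centerSucc (j + 1) (by lia) hj with hΘ | ⟨ε, hε, hsmall⟩
  · obtain ⟨y, hy⟩ := hx.exists
    exact hΘ x ⟨(x, y), hy, rfl⟩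
  · exfalso
    have hlarge : ∀ᶠ y in 𝓝[>] 0, ε * ‖Real.log^[j + 1] y‖ < ‖Real.log^[j + 1] y - Θ (j + 1) x‖ :=
      (tendsto_iterate_log_nhdsGT_zero_cobounded j).eventually
        (eventually_cobounded_mul_norm_lt_norm_sub _ hε.2)
    obtain ⟨y, hyC, hy⟩ := (hx.and_eventually hlarge).exists
    have hy' := hsmall _ hyC
    rw [H.apply_succ hj hyC, Nat.add_sub_cancel, Real.log_abs, hY y hyC,
      ← Function.iterate_succ_apply' Real.log] at hy'
    exact lt_asymm hy hy'

theorem eq_iterate_log_s2 (H : IsLogScale n r C Θ Y) (hx : ∃ᶠ y in 𝓝[>] 0, (x, y) ∈ C) {j : ℕ}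
    (hj : j ≤ r) : ∀ y, (x, y) ∈ C → Y j (x, y) = Real.log^[j] y := by
  induction j with
  | zero =>
    intro y hy
    simp [H.base _ hy, H.center_zero_eq_zero hx]
  | succ j ih =>
    have hY := ih (by lia)
    intro y hy
    rw [H.apply_succ hj hy, H.center_succ_eq_zero hj hx hY, sub_zero, hY y hy,
      Function.iterate_succ_apply']

theorem sign_iterate_log_eq (H : IsLogScale n r C Θ Y) (hx : ∃ᶠ y in 𝓝[>] 0, (x, y) ∈ C) {j : ℕ}
    (hj : j ≤ r) {y : ℝ} (hy : (x, y) ∈ C) :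
    SignType.sign (Real.log^[j] y) = iterateLogSign j := by
  obtain ⟨σ, -, hσ⟩ := forall_pos_or_forall_neg_iff.1 (H.sign j hj)
  obtain ⟨z, hzC, hz⟩ := (hx.and_eventually (eventually_sign_iterate_log_eq j)).exists
  rw [← H.eq_iterate_log_s2 hx hj y hy, hσ _ hy, ← hz, ← H.eq_iterate_log_s2 hx hj z hzC, hσ _ hzC]

end IsLogScale

theorem isLogScale_iterate_log {n r : ℕ} {C : Set ((Fin n → ℝ) × ℝ)}
    (hC : ∀ p ∈ C, ∀ j ≤ r, SignType.sign (Real.log^[j] p.2) = iterateLogSign j) :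
    IsLogScale n r C 0 fun j p => Real.log^[j] p.2 where
  base p _ := by simp
  step j hj _ p _ := by
    obtain ⟨i, rfl⟩ := Nat.exists_eq_add_of_le' hj
    simp [Function.iterate_succ_apply']
  sign j hj := forall_pos_or_forall_neg_iff.2
    ⟨iterateLogSign j, iterateLogSign_ne_zero j, fun p hp => hC p hp j hj⟩
  center0 := .inl fun _ _ => rfl
  centerSucc _ _ _ := .inl fun _ _ => rfl

namespace IsSimple

variable {n : ℕ} {C : Set ((Fin n → ℝ) × ℝ)} {p : (Fin n → ℝ) × ℝ}

theorem snd_pos (hC : IsSimple C) (hp : p ∈ C) : 0 < p.2 := by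
  obtain ⟨d, -, hd⟩ := hC p.1 ⟨p.2, hp⟩
  exact ((hd p.2).1 hp).1

theorem eventually_mem_s2 (hC : IsSimple C) (hp : p ∈ C) : ∀ᶠ y in 𝓝[>] 0, (p.1, y) ∈ C := by
  obtain ⟨d, -, hd⟩ := hC p.1 ⟨p.2, hp⟩
  obtain ⟨hpos, hlt⟩ := (hd p.2).1 hp
  filter_upwards [Ioo_mem_nhdsGT hpos] with y hy
  exact (hd y).2 ⟨hy.1, (EReal.coe_lt_coe_iff.2 hy.2).trans hlt⟩

theorem exists_gt_mem (hC : IsSimple C) (hp : p ∈ C) : ∃ y, p.2 < y ∧ (p.1, y) ∈ C := by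
  obtain ⟨d, -, hd⟩ := hC p.1 ⟨p.2, hp⟩
  obtain ⟨hpos, hlt⟩ := (hd p.2).1 hp
  obtain ⟨y, hpy, hyd⟩ := EReal.lt_iff_exists_real_btwn.1 hlt
  have hpy := EReal.coe_lt_coe_iff.1 hpy
  exact ⟨y, hpy, (hd y).2 ⟨hpos.trans hpy, hyd⟩⟩

theorem forall_pos_and_mul_ee_lt_one_iff (hC : IsSimple C) (r : ℕ) :
    (∀ p ∈ C, 0 < p.2 ∧ p.2 * ee r < 1) ↔ ∀ p ∈ C, p.2 * ee r ≤ 1 := by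
  refine ⟨fun h p hp => (h p hp).2.le, fun h p hp => ⟨hC.snd_pos hp, ?_⟩⟩
  cases r with
  | zero => simp [ee]
  | succ r =>
    obtain ⟨y, hpy, hy⟩ := hC.exists_gt_mem hp
    exact (mul_lt_mul_of_pos_right hpy (Real.exp_pos _)).trans_le (h _ hy)

end IsSimple

theorem exists_logScale_iff_sup_le_general {n r : ℕ} (C : Set ((Fin n → ℝ) × ℝ))
    (hC : ∀ p ∈ C, ∃ᶠ y in 𝓝[>] 0, (p.1, y) ∈ C) :
    (∃ (Θ : ℕ → (Fin n → ℝ) → ℝ) (Y : ℕ → ((Fin n → ℝ) × ℝ) → ℝ),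
        IsLogScale n r C Θ Y) ↔
      ∀ p ∈ C, 0 < p.2 ∧ p.2 * ee r < 1 := by
  simp only [← forall_sign_iterate_log_eq_iff]
  constructor
  · rintro ⟨Θ, Y, H⟩ p hp j hj
    exact H.sign_iterate_log_eq (hC p hp) hj hp
  · intro h
    exact ⟨_, _, isLogScale_iterate_log h⟩

/-- Corollary 2.20. -/
theorem exists_logScale_iff_sup_le {n r : ℕ} (C : Set ((Fin n → ℝ) × ℝ))
    (hC : IsSimple C) :
    (∃ (Θ : ℕ → (Fin n → ℝ) → ℝ) (Y : ℕ → ((Fin n → ℝ) × ℝ) → ℝ),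
        IsLogScale n r C Θ Y) ↔
      ∀ p ∈ C, p.2 * ee r ≤ 1 :=
  (exists_logScale_iff_sup_le_general C fun _ hp => (hC.eventually_mem_s2 hp).frequently).trans
    (hC.forall_pos_and_mul_ee_lt_one_iff r)
end

section
/- Let r ∈ ℕ₀ and let q = (q₀,…,q_r) ∈ ℚ^{r+1} with q ≠ 0. Let j(q) := min{j : q_j ≠ 0} and let q_diff := (q₀−1,…,q_{j(q)}−1, q_{j(q)+1},…,q_r) (i.e., subtract 1 from the components with index ≤ j(q)). Then lim_{y→0⁺} | (d/dy ∏_{j=0}^{r} |y_j(y)|^{q_j}) / ∏_{j=0}^{r} |y_j(y)|^{(q_diff)_j} | = |q_{j(q)}|. (Proposition 2.24.) -/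
/-!
Statement 4 (Proposition 2.24): with `(y₀,…,y_r)` the elementary `r`-logarithmic scale
on `(0, 1/e_r)` and `q ∈ ℚ^{r+1}`, `q ≠ 0`, `j0 = j(q)` the least index with `q_{j0} ≠ 0`,
and `q_diff` obtained from `q` by subtracting `1` from all components of index `≤ j0`,
one has
`lim_{y→0⁺} | (d/dy ∏ |y_j|^{q_j}) / ∏ |y_j|^{(q_diff)_j} | = |q_{j0}|`.
(The interval `(0, 1/e_r)`, with `1/e₀ = +∞`, is expressed as `0 < y ∧ y * e_r < 1`.)
-/

open Filter Topology

/-- the elementary logarithmic scale: `y₀ = y`, `y₁ = log y`,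
`y_j = log_{j-1}(-log y)` for `j ≥ 2`. -/
noncomputable def elemScale : ℕ → ℝ → ℝ
  | 0, y => y
  | 1, y => Real.log y
  | j + 2, y => iterLog (j + 1) (-Real.log y)

/-!
Since `Real.log (-x) = Real.log x`, the scale satisfies `y_{j+1} = log y_j` for every `j`, including
`j = 1`. Hence `y_j' = ∏_{i<j} y_i⁻¹`, and `∏ |y_j|^{q_j} = exp (∑ q_j y_{j+1})` has logarithmic
derivative `∑ q_j ∏_{i≤j} y_i⁻¹`. Dividing by `∏ |y_j|^{(q_diff)_j}` amounts to multiplying this sum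
by `∏_{i≤j0} |y_i|`. Up to a common sign, the terms with `j < j0` vanish, the one with `j = j0` is
`q_{j0}`, and those with `j > j0` are `q_j ∏_{j0<i≤j} y_i⁻¹`, which tend to `0`.
-/

section RpowProducts

variable {ι : Type*} {s : Finset ι}

lemma prod_abs_rpow_eq_exp_sum {x : ι → ℝ} (hx : ∀ i ∈ s, x i ≠ 0) (q : ι → ℝ) :
    ∏ i ∈ s, |x i| ^ q i = Real.exp (∑ i ∈ s, q i * Real.log (x i)) := by
  rw [Real.exp_sum]
  refine Finset.prod_congr rfl fun i hi => ?_
  rw [Real.rpow_def_of_pos (abs_pos.mpr (hx i hi)), Real.log_abs, mul_comm]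

lemma hasDerivAt_prod_abs_rpow {f : ι → ℝ → ℝ} {f' : ι → ℝ} {y : ℝ}
    (hf : ∀ i ∈ s, HasDerivAt (f i) (f' i) y) (hne : ∀ i ∈ s, f i y ≠ 0) (q : ι → ℝ) :
    HasDerivAt (fun t => ∏ i ∈ s, |f i t| ^ q i)
      ((∏ i ∈ s, |f i y| ^ q i) * ∑ i ∈ s, q i * (f' i / f i y)) y := by
  have hsum : HasDerivAt (fun t => ∑ i ∈ s, q i * Real.log (f i t))
      (∑ i ∈ s, q i * (f' i / f i y)) y :=
    HasDerivAt.fun_sum fun i hi => ((hf i hi).log (hne i hi)).const_mul (q i)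
  have hne_near : ∀ᶠ t in 𝓝 y, ∀ i ∈ s, f i t ≠ 0 :=
    (Finset.eventually_all s).mpr fun i hi => (hf i hi).continuousAt.eventually_ne (hne i hi)
  rw [prod_abs_rpow_eq_exp_sum hne q]
  exact hsum.exp.congr_of_eventuallyEq
    (hne_near.mono fun t ht => prod_abs_rpow_eq_exp_sum ht q)

lemma prod_abs_rpow_ite_sub_one {x : ι → ℝ} (hx : ∀ i ∈ s, x i ≠ 0) (q : ι → ℝ)
    (p : ι → Prop) [DecidablePred p] :
    ∏ i ∈ s, |x i| ^ (if p i then q i - 1 else q i) =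
      (∏ i ∈ s, |x i| ^ q i) / |∏ i ∈ s with p i, x i| := by
  rw [Finset.abs_prod, Finset.prod_filter, ← Finset.prod_div_distrib]
  refine Finset.prod_congr rfl fun i hi => ?_
  split_ifs
  · exact Real.rpow_sub_one (abs_ne_zero.mpr (hx i hi)) (q i)
  · exact (div_one _).symm

end RpowProducts

lemma elemScale_succ (j : ℕ) (y : ℝ) : elemScale (j + 1) y = Real.log (elemScale j y) := by
  match j with
  | 0 => rfl
  | 1 => exact Real.log_neg_eq_log (Real.log y)
  | _ + 2 => rfl

lemma hasDerivAt_elemScale {j : ℕ} {y : ℝ} (hne : ∀ i < j, elemScale i y ≠ 0) :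
    HasDerivAt (elemScale j) (∏ i ∈ Finset.range j, (elemScale i y)⁻¹) y := by
  induction j with
  | zero => exact hasDerivAt_id y
  | succ j ih =>
    rw [Finset.prod_range_succ, ← div_eq_mul_inv, funext (elemScale_succ j)]
    exact (ih fun i hi => hne i (by lia)).log (hne j j.lt_succ_self)

lemma hasDerivAt_prod_abs_rpow_elemScale {n : ℕ} {y : ℝ}
    (hne : ∀ j ∈ Finset.range n, elemScale j y ≠ 0) (q : ℕ → ℝ) :
    HasDerivAt (fun t => ∏ j ∈ Finset.range n, |elemScale j t| ^ q j)
      ((∏ j ∈ Finset.range n, |elemScale j y| ^ q j) *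
        ∑ j ∈ Finset.range n, q j * ∏ i ∈ Finset.range (j + 1), (elemScale i y)⁻¹) y := by
  simp only [Finset.prod_range_succ, ← div_eq_mul_inv]
  refine hasDerivAt_prod_abs_rpow (fun j hj => hasDerivAt_elemScale fun i hi => hne i ?_) hne q
  simp only [Finset.mem_range] at hj ⊢
  lia

lemma tendsto_elemScale_succ_cobounded (j : ℕ) :
    Tendsto (elemScale (j + 1)) (𝓝[>] 0) (Bornology.cobounded ℝ) := by
  induction j with
  | zero => exact Real.tendsto_log_nhdsGT_zero.mono_right IsOrderBornology.atBot_le_cobounded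
  | succ j ih =>
    have hlog : Tendsto (fun y => Real.log ‖elemScale (j + 1) y‖) (𝓝[>] 0) atTop :=
      Real.tendsto_log_atTop.comp (tendsto_norm_cobounded_atTop.comp ih)
    simp only [Real.norm_eq_abs, Real.log_abs, ← elemScale_succ] at hlog
    exact hlog.mono_right IsOrderBornology.atTop_le_cobounded

lemma eventually_elemScale_ne_zero (j : ℕ) : ∀ᶠ y in 𝓝[>] 0, elemScale j y ≠ 0 := by
  cases j with
  | zero => exact eventually_mem_nhdsWithin.mono fun _ hy => ne_of_gt hy
  | succ j => exact (tendsto_elemScale_succ_cobounded j).eventually_ne_cobounded 0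

lemma tendsto_prod_Ico_inv_elemScale {m n : ℕ} (hm : 0 < m) (hmn : m < n) :
    Tendsto (fun y => ∏ i ∈ Finset.Ico m n, (elemScale i y)⁻¹) (𝓝[>] 0) (𝓝 0) := by
  have hinv : ∀ i ∈ Finset.Ico m n, Tendsto (fun y => (elemScale i y)⁻¹) (𝓝[>] 0) (𝓝 0) := by
    intro i hi
    obtain ⟨k, rfl⟩ := Nat.exists_eq_add_one.mpr (hm.trans_le (Finset.mem_Ico.mp hi).1)
    exact Filter.tendsto_inv₀_cobounded.comp (tendsto_elemScale_succ_cobounded k)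
  have hprod := tendsto_finsetProd _ hinv
  rwa [Finset.prod_eq_zero (Finset.left_mem_Ico.mpr hmn) rfl] at hprod

lemma tendsto_prod_inv_mul_prod_elemScale {m n : ℕ} (hm : 0 < m) (hmn : m ≤ n) :
    Tendsto (fun y => (∏ i ∈ Finset.range n, (elemScale i y)⁻¹) *
        ∏ i ∈ Finset.range m, elemScale i y)
      (𝓝[>] 0) (𝓝 (if n = m then 1 else 0)) := by
  have hIco : Tendsto (fun y => ∏ i ∈ Finset.Ico m n, (elemScale i y)⁻¹) (𝓝[>] 0)
      (𝓝 (if n = m then 1 else 0)) := by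
    split_ifs with h
    · simp only [h, Finset.Ico_self, Finset.prod_empty, tendsto_const_nhds]
    · exact tendsto_prod_Ico_inv_elemScale hm (by lia)
  have hne : ∀ᶠ y in 𝓝[>] 0, ∀ i ∈ Finset.range m, elemScale i y ≠ 0 :=
    (Finset.eventually_all _).mpr fun i _ => eventually_elemScale_ne_zero i
  refine hIco.congr' ?_
  filter_upwards [hne] with y hy
  rw [← Finset.prod_range_mul_prod_Ico _ hmn, Finset.prod_inv_distrib (s := Finset.range m),
    mul_right_comm, inv_mul_cancel₀ (Finset.prod_ne_zero_iff.mpr hy), one_mul]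

lemma tendsto_sum_mul_prod_elemScale {q : ℕ → ℝ} {r j₀ : ℕ} (hj₀ : j₀ ≤ r)
    (hmin : ∀ i < j₀, q i = 0) :
    Tendsto (fun y => (∑ j ∈ Finset.range (r + 1),
          q j * ∏ i ∈ Finset.range (j + 1), (elemScale i y)⁻¹) *
        ∏ i ∈ Finset.range (j₀ + 1), elemScale i y)
      (𝓝[>] 0) (𝓝 (q j₀)) := by
  have hterm : ∀ j ∈ Finset.range (r + 1),
      Tendsto (fun y => (q j * ∏ i ∈ Finset.range (j + 1), (elemScale i y)⁻¹) *
          ∏ i ∈ Finset.range (j₀ + 1), elemScale i y)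
        (𝓝[>] 0) (𝓝 (if j = j₀ then q j else 0)) := by
    intro j _
    rcases lt_or_ge j j₀ with hlt | hge
    · simp only [hmin j hlt, zero_mul, ite_self, tendsto_const_nhds]
    · simpa only [mul_assoc, add_left_inj, mul_ite, mul_one, mul_zero] using
        (tendsto_prod_inv_mul_prod_elemScale j₀.add_one_pos
          (Nat.add_le_add_right hge 1)).const_mul (q j)
  simp only [Finset.sum_mul]
  have hsum := tendsto_finsetSum _ hterm
  rwa [Finset.sum_ite_eq', if_pos (Finset.mem_range_succ_iff.mpr hj₀)] at hsum

theorem deriv_elemScale_prod_limit_general {q : ℕ → ℝ} {r j₀ : ℕ} (hj₀ : j₀ ≤ r)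
    (hmin : ∀ i < j₀, q i = 0) :
    Tendsto
      (fun y : ℝ =>
        |deriv (fun t : ℝ => ∏ j ∈ Finset.range (r + 1), |elemScale j t| ^ q j) y /
          ∏ j ∈ Finset.range (r + 1), |elemScale j y| ^ (if j ≤ j₀ then q j - 1 else q j)|)
      (𝓝[>] 0) (𝓝 |q j₀|) := by
  have hne : ∀ᶠ y in 𝓝[>] 0, ∀ j ∈ Finset.range (r + 1), elemScale j y ≠ 0 :=
    (Finset.eventually_all _).mpr fun j _ => eventually_elemScale_ne_zero j
  have hfilter : {j ∈ Finset.range (r + 1) | j ≤ j₀} = Finset.range (j₀ + 1) := by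
    ext j
    simp only [Finset.mem_filter, Finset.mem_range]
    lia
  refine (tendsto_sum_mul_prod_elemScale hj₀ hmin).abs.congr' ?_
  filter_upwards [hne] with y hy
  have hprod : ∏ j ∈ Finset.range (r + 1), |elemScale j y| ^ q j ≠ 0 :=
    (Finset.prod_pos fun j hj => Real.rpow_pos_of_pos (abs_pos.mpr (hy j hj)) _).ne'
  rw [(hasDerivAt_prod_abs_rpow_elemScale hy q).deriv, prod_abs_rpow_ite_sub_one hy q, hfilter,
    div_div_eq_mul_div, mul_assoc, mul_div_cancel_left₀ _ hprod, abs_mul, abs_mul, abs_abs]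

/-- Proposition 2.24. -/
theorem deriv_elemScale_prod_limit (r : ℕ) (q : ℕ → ℚ) (j0 : ℕ) (hj0 : j0 ≤ r)
    (hq : q j0 ≠ 0) (hmin : ∀ i < j0, q i = 0) :
    Tendsto
      (fun y : ℝ =>
        |deriv (fun t : ℝ => ∏ j ∈ Finset.range (r + 1), |elemScale j t| ^ ((q j : ℝ))) y /
          ∏ j ∈ Finset.range (r + 1),
            |elemScale j y| ^ (((if j ≤ j0 then q j - 1 else q j) : ℚ) : ℝ)|)
      (nhdsWithin 0 {y : ℝ | 0 < y ∧ y * ee r < 1}) (nhds |(q j0 : ℝ)|) := by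
  simpa [apply_ite] using (deriv_elemScale_prod_limit_general (q := fun j => (q j : ℝ)) hj0
    fun i hi => by simp [hmin i hi]).mono_left (nhdsWithin_mono 0 fun _ hy => hy.1)
end

section
/- Let U ⊆ ℝⁿ be open, g : U → ℝ a function, and a ∈ U. Then the following are equivalent: (i) g is real analytic at a; (ii) g is G^∞ at a and there is ε > 0 such that for every z ∈ ℝⁿ with |z| ≤ 1 the function y ↦ g(a + y·z) is defined and real analytic on (−ε, ε) (in particular a + y·z ∈ U for all |y| < ε). (Fact 3.5, the Gateaux-differentiability characterization of real analyticity.) -/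
/-!
Statement 14 (Fact 3.5): for `U ⊆ ℝⁿ` open, `g : U → ℝ` and `a ∈ U`, the function
`g` is real analytic at `a` iff `g` is `G^∞` at `a` and there is `ε > 0` such that
for every `z` with `‖z‖ ≤ 1` the function `y ↦ g(a + y·z)` is defined and real
analytic on `(-ε, ε)`.
-/

/-- `g` is `G^k` (k-times Gateaux differentiable) at `a`: for every direction `z`
the function `y ↦ g (a + y • z)` is `C^k` at `0`, and `z ↦ (d^k/dy^k) g(a+yz)|₀`
is given by a homogeneous polynomial of degree `k` in the coordinates of `z`. -/
def IsGk (n k : ℕ) (g : EuclideanSpace ℝ (Fin n) → ℝ) (a : EuclideanSpace ℝ (Fin n)) :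
    Prop :=
  (∀ z : EuclideanSpace ℝ (Fin n), ContDiffAt ℝ k (fun y : ℝ => g (a + y • z)) 0) ∧
  ∃ P : MvPolynomial (Fin n) ℝ, P.IsHomogeneous k ∧
    ∀ z : EuclideanSpace ℝ (Fin n),
      MvPolynomial.eval (fun i => z i) P = iteratedDeriv k (fun y : ℝ => g (a + y • z)) 0

/-!
A `k`-linear map whose diagonal values are bounded by `C` on a ball of radius `r`, with any centre,
has symmetric part of norm at most `C * (2e / r) ^ k`, by polarization and `k ^ k ≤ e ^ k * k!`.
If the Taylor series of `g` along each line through `a` converges, its coefficients are bounded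
geometrically, with constants that depend on the line; by Baire's theorem the constants are uniform
on some ball, so the symmetrized Taylor series has positive radius of convergence. Its sum agrees
with `g` near `a` by the identity theorem on each line, because the segments of a fixed length on
which `g` is analytic cover a neighbourhood of `a`.
-/

open Finset Filter Metric Module Topology
open scoped Nat

section Polarization

lemma sum_filter_forall_exists_eq_some {ι N : Type*} [Fintype ι] [DecidableEq ι]
    [AddCommMonoid N] (f : (ι → Option ι) → N) :
    ∑ r with ∀ j, ∃ i, r i = some j, f r = ∑ σ : Equiv.Perm ι, f (fun i ↦ some (σ i)) := by
  symm
  refine sum_bij (fun σ _ i ↦ some (σ i)) ?_ ?_ ?_ (by simp)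
  · exact fun σ _ ↦ mem_filter_univ _ |>.2 fun j ↦ ⟨σ.symm j, by simp⟩
  · exact fun σ _ τ _ h ↦ Equiv.ext fun i ↦ by simpa using congrFun h i
  · intro r hr
    choose s hs using (mem_filter_univ _).1 hr
    have hs_bij : Function.Bijective s :=
      Finite.injective_iff_bijective.1 fun j j' h ↦ by simpa [hs] using congrArg r h
    refine ⟨(Equiv.ofBijective s hs_bij).symm, mem_univ _, funext fun i ↦ ?_⟩
    obtain ⟨j, rfl⟩ := hs_bij.surjective i
    simp [hs, Equiv.ofBijective_symm_apply_apply]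

/- Polarization. Expanding the left-hand side gives choices of `x` or some `v i` for each argument;
inclusion–exclusion cancels all of them but those in which every `v i` occurs. -/
lemma sum_neg_one_pow_smul_map_add_sum_compl {R M N ι : Type*} [Fintype ι] [DecidableEq ι]
    [Semiring R] [AddCommMonoid M] [Module R M] [AddCommGroup N] [Module R N]
    (p : MultilinearMap R (fun _ : ι ↦ M) N) (x : M) (v : ι → M) :
    ∑ t : Finset ι, (-1 : ℤ) ^ #t • p (fun _ ↦ x + ∑ i ∈ tᶜ, v i) =
      ∑ σ : Equiv.Perm ι, p (fun i ↦ v (σ i)) := by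
  let f (r : ι → Option ι) : N := p fun i ↦ (r i).elim x v
  let missing (j : ι) : Finset (ι → Option ι) := {r | ∀ i, r i ≠ some j}
  have expand (t : Finset ι) : p (fun _ ↦ x + ∑ i ∈ tᶜ, v i) = ∑ r ∈ t.inf missing, f r := by
    have hsum : x + ∑ i ∈ tᶜ, v i = ∑ o ∈ insertNone tᶜ, o.elim x v := by simp [sum_insertNone]
    have hinf : t.inf missing = Fintype.piFinset fun _ ↦ insertNone tᶜ := by
      ext r
      simp only [mem_inf, Fintype.mem_piFinset, mem_insertNone, missing, mem_filter_univ,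
        mem_compl, Option.mem_def]
      exact ⟨fun h i j hj hjt ↦ h j hjt i hj, fun h j hjt i hj ↦ h i j hj hjt⟩
    rw [hsum, hinf, p.map_sum_finset]
  have surj : (univ.inf fun j ↦ (missing j)ᶜ) = ({r | ∀ j, ∃ i, r i = some j} : Finset _) := by
    ext r
    simp [mem_inf, missing]
  calc
    _ = ∑ t ∈ univ.powerset, (-1 : ℤ) ^ #t • ∑ r ∈ t.inf missing, f r := by simp [expand]
    _ = ∑ r ∈ univ.inf fun j ↦ (missing j)ᶜ, f r :=
      (inclusion_exclusion_sum_inf_compl univ missing f).symm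
    _ = ∑ σ : Equiv.Perm ι, p (fun i ↦ v (σ i)) := by
      rw [surj, sum_filter_forall_exists_eq_some]
      simp [f]

lemma norm_sum_perm_le_of_norm_diag_le {R ι E F : Type*} [Fintype ι] [DecidableEq ι]
    [Semiring R] [SeminormedAddCommGroup E] [Module R E] [SeminormedAddCommGroup F] [Module R F]
    (p : MultilinearMap R (fun _ : ι ↦ E) F) {x : E} {v : ι → E} {C : ℝ}
    (h : ∀ y, ‖y - x‖ ≤ ∑ i, ‖v i‖ → ‖p fun _ ↦ y‖ ≤ C) :
    ‖∑ σ : Equiv.Perm ι, p (fun i ↦ v (σ i))‖ ≤ 2 ^ Fintype.card ι * C := by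
  have hterm (t : Finset ι) : ‖(-1 : ℤ) ^ #t • p (fun _ ↦ x + ∑ i ∈ tᶜ, v i)‖ ≤ C := by
    have hsign : ‖(-1 : ℤ) ^ #t • p (fun _ ↦ x + ∑ i ∈ tᶜ, v i)‖ =
        ‖p (fun _ ↦ x + ∑ i ∈ tᶜ, v i)‖ := by
      rcases neg_one_pow_eq_or ℤ #t with hs | hs <;> simp [hs]
    rw [hsign]
    refine h _ ?_
    rw [add_sub_cancel_left]
    exact (norm_sum_le _ _).trans <|
      sum_le_sum_of_subset_of_nonneg (subset_univ _) fun _ _ _ ↦ norm_nonneg _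
  rw [← sum_neg_one_pow_smul_map_add_sum_compl p x v]
  refine (norm_sum_le_of_le univ fun t _ ↦ hterm t).trans_eq ?_
  simp

end Polarization

section FormalSeries

variable {𝕜 E F : Type*} [NontriviallyNormedField 𝕜]
  [NormedAddCommGroup E] [NormedSpace 𝕜 E] [NormedAddCommGroup F] [NormedSpace 𝕜 F]

/-- The symmetric part of a continuous multilinear map: the average of `p` over all permutations of
its arguments. It has the same diagonal values as `p`, and unlike `p` it is determined by them. -/
noncomputable def symmetrize {k : ℕ} (p : E [×k]→L[𝕜] F) : E [×k]→L[𝕜] F :=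
  (k ! : 𝕜)⁻¹ • ∑ σ : Equiv.Perm (Fin k), p.domDomCongr σ

lemma symmetrize_apply {k : ℕ} (p : E [×k]→L[𝕜] F) (v : Fin k → E) :
    symmetrize p v = (k ! : 𝕜)⁻¹ • ∑ σ : Equiv.Perm (Fin k), p (fun i ↦ v (σ i)) := by
  simp [symmetrize]

lemma symmetrize_apply_diag [CharZero 𝕜] {k : ℕ} (p : E [×k]→L[𝕜] F) (z : E) :
    symmetrize p (fun _ ↦ z) = p (fun _ ↦ z) := by
  have hk : (k ! : 𝕜) ≠ 0 := mod_cast k.factorial_ne_zero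
  simp [symmetrize_apply, Fintype.card_perm, ← Nat.cast_smul_eq_nsmul 𝕜, smul_smul, hk]

/-- The series obtained by symmetrizing every term of `p`. It has the same diagonal values as `p`,
and its terms, unlike those of `p`, can be bounded in terms of them. -/
noncomputable def symmetrizeSeries (p : FormalMultilinearSeries 𝕜 E F) :
    FormalMultilinearSeries 𝕜 E F :=
  fun k ↦ symmetrize (p k)

/-- The restriction of a formal multilinear series `p` to the line spanned by `z`: the series in one
variable `t` whose coefficients are the diagonal values `p k (z, …, z)`. -/
noncomputable def lineSeries (p : FormalMultilinearSeries 𝕜 E F) (z : E) :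
    FormalMultilinearSeries 𝕜 𝕜 F :=
  p.compContinuousLinearMap (ContinuousLinearMap.toSpanSingleton 𝕜 z)

lemma coeff_lineSeries (p : FormalMultilinearSeries 𝕜 E F) (z : E) (k : ℕ) :
    (lineSeries p z).coeff k = p k (fun _ ↦ z) := by
  rw [FormalMultilinearSeries.coeff, lineSeries,
    FormalMultilinearSeries.compContinuousLinearMap_apply]
  congr 1 with i
  simp

lemma formalMultilinearSeries_ext_coeff {p q : FormalMultilinearSeries 𝕜 𝕜 F}
    (h : ∀ k, p.coeff k = q.coeff k) : p = q :=
  FormalMultilinearSeries.ext fun k ↦ by rw [← p.mkPiRing_coeff_eq, h, q.mkPiRing_coeff_eq]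

lemma lineSeries_symmetrizeSeries [CharZero 𝕜] (p : FormalMultilinearSeries 𝕜 E F) (z : E) :
    lineSeries (symmetrizeSeries p) z = lineSeries p z :=
  formalMultilinearSeries_ext_coeff fun k ↦ by
    rw [coeff_lineSeries, coeff_lineSeries, symmetrizeSeries, symmetrize_apply_diag]

lemma exists_nat_norm_coeff_le {p : FormalMultilinearSeries 𝕜 𝕜 F} (hp : 0 < p.radius) :
    ∃ M : ℕ, ∀ k, ‖p.coeff k‖ ≤ M * M ^ k := by
  obtain ⟨C, r, -, hr, hbound⟩ := p.le_mul_pow_of_radius_pos hp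
  obtain ⟨M, hM⟩ := exists_nat_ge (max C r)
  refine ⟨M, fun k ↦ ?_⟩
  rw [← FormalMultilinearSeries.norm_apply_eq_norm_coef]
  exact (hbound k).trans <| by
    gcongr
    exacts [(le_max_left ..).trans hM, (le_max_right ..).trans hM]

lemma radius_pos_of_norm_le {p : FormalMultilinearSeries 𝕜 E F} {C r : ℝ}
    (h : ∀ k, ‖p k‖ ≤ C * r ^ k) : 0 < p.radius := by
  have hle : ((‖r‖₊ + 1)⁻¹ : NNReal) ≤ p.radius := by
    refine p.le_radius_of_bound |C| fun k ↦ ?_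
    have hk : ‖p k‖ ≤ |C| * (|r| + 1) ^ k := calc
      ‖p k‖ ≤ |C * r ^ k| := (h k).trans (le_abs_self _)
      _ = |C| * |r| ^ k := by rw [abs_mul, abs_pow]
      _ ≤ |C| * (|r| + 1) ^ k := by gcongr; exact le_add_of_nonneg_right zero_le_one
    simpa [← div_eq_mul_inv] using div_le_of_le_mul₀ (by positivity) (abs_nonneg C) hk
  exact lt_of_lt_of_le (by simp) hle

end FormalSeries

section Radius

variable {𝕜 E F : Type*} [RCLike 𝕜]
  [NormedAddCommGroup E] [NormedSpace 𝕜 E] [NormedAddCommGroup F] [NormedSpace 𝕜 F]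

lemma norm_symmetrize_apply_le_of_norm_diag_le {k : ℕ} (p : E [×k]→L[𝕜] F) {x : E} {v : Fin k → E}
    {C : ℝ} (h : ∀ y, ‖y - x‖ ≤ ∑ i, ‖v i‖ → ‖p fun _ ↦ y‖ ≤ C) :
    ‖symmetrize p v‖ ≤ 2 ^ k * C / k ! := by
  have hsum := norm_sum_perm_le_of_norm_diag_le p.toMultilinearMap h
  rw [symmetrize_apply, norm_smul, norm_inv, RCLike.norm_natCast, inv_mul_eq_div]
  gcongr
  simpa using hsum

lemma norm_symmetrize_le_of_norm_diag_le {k : ℕ} (p : E [×k]→L[𝕜] F) {x : E} {r C : ℝ}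
    (hr : 0 < r) (h : ∀ y ∈ closedBall x r, ‖p fun _ ↦ y‖ ≤ C) :
    ‖symmetrize p‖ ≤ C * (2 * Real.exp 1 / r) ^ k := by
  have hC : 0 ≤ C := (norm_nonneg _).trans (h x (mem_closedBall_self hr.le))
  refine ContinuousMultilinearMap.opNorm_le_bound (by positivity) fun v ↦ ?_
  by_cases! hv : ∃ i, v i = 0
  · obtain ⟨i, hi⟩ := hv
    rw [(symmetrize p).map_coord_zero i hi, norm_zero]
    positivity
  let c (i : Fin k) : ℝ := r / (k * ‖v i‖)
  have hc (i) : ‖(c i : 𝕜)‖ = c i := RCLike.norm_of_nonneg (by positivity)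
  have hsum : ∑ i, ‖(c i : 𝕜) • v i‖ ≤ r := by
    have hterm (i : Fin k) : ‖(c i : 𝕜) • v i‖ = r / k := by
      rw [norm_smul, hc, div_mul_eq_mul_div, mul_div_mul_right _ _ (norm_ne_zero_iff.2 (hv i))]
    simp only [hterm, sum_const, card_univ, Fintype.card_fin, nsmul_eq_mul]
    rw [mul_div_left_comm]
    exact mul_le_of_le_one_right hr.le (div_self_le_one _)
  have hprod : ∏ i, c i = (r ^ k / k ^ k) / ∏ i, ‖v i‖ := by
    simp [c, prod_div_distrib, prod_mul_distrib, div_div]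
  have hk : (k : ℝ) ^ k / k ! ≤ Real.exp 1 ^ k := by
    simpa [← Real.exp_nat_mul] using Real.pow_div_factorial_le_exp (k : ℝ) k.cast_nonneg k
  have hscaled : (∏ i, c i) * ‖symmetrize p v‖ ≤ 2 ^ k * C / k ! := by
    simpa [(symmetrize p).map_smul_univ, norm_smul, hc] using
      norm_symmetrize_apply_le_of_norm_diag_le p fun y hy ↦
        h y (mem_closedBall_iff_norm.2 (hy.trans hsum))
  have hv_pos : 0 < ∏ i, ‖v i‖ := prod_pos fun i _ ↦ norm_pos_iff.2 (hv i)
  have hk_pos : (0 : ℝ) < (k : ℝ) ^ k := mod_cast Nat.pow_self_pos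
  calc
    ‖symmetrize p v‖ = ((∏ i, c i) * ‖symmetrize p v‖) * (k ^ k / r ^ k * ∏ i, ‖v i‖) := by
      rw [hprod]
      field_simp
    _ ≤ 2 ^ k * C / k ! * (k ^ k / r ^ k * ∏ i, ‖v i‖) := by gcongr
    _ = C * (2 ^ k * ((k : ℝ) ^ k / k !) / r ^ k) * ∏ i, ‖v i‖ := by ring
    _ ≤ C * (2 ^ k * Real.exp 1 ^ k / r ^ k) * ∏ i, ‖v i‖ := by gcongr
    _ = C * (2 * Real.exp 1 / r) ^ k * ∏ i, ‖v i‖ := by rw [div_pow, mul_pow]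

lemma radius_symmetrizeSeries_pos [CompleteSpace E] {p : FormalMultilinearSeries 𝕜 E F}
    (hp : ∀ z, 0 < (lineSeries p z).radius) :
    0 < (symmetrizeSeries p).radius := by
  let S (M : ℕ) : Set E := {z | ∀ k, ‖p k fun _ ↦ z‖ ≤ M * M ^ k}
  have hS_closed (M : ℕ) : IsClosed (S M) := by
    simp only [S, Set.ofPred_forall]
    refine isClosed_iInter fun k ↦ isClosed_le ?_ continuous_const
    exact ((p k).cont.comp (continuous_pi fun _ ↦ continuous_id)).norm
  have hS_cover : ⋃ M, S M = Set.univ := Set.iUnion_eq_univ_iff.2 fun z ↦ by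
    simpa only [S, Set.mem_ofPred_eq, coeff_lineSeries] using exists_nat_norm_coeff_le (hp z)
  obtain ⟨M, x, hx⟩ := nonempty_interior_of_iUnion_of_closed hS_closed hS_cover
  obtain ⟨r, hr, hball⟩ := nhds_basis_closedBall.mem_iff.1 (mem_interior_iff_mem_nhds.1 hx)
  refine radius_pos_of_norm_le (C := M) (r := M * (2 * Real.exp 1 / r)) fun k ↦ ?_
  rw [mul_pow, ← mul_assoc]
  exact norm_symmetrize_le_of_norm_diag_le (p k) hr fun y hy ↦ hball hy k

end Radius

section Lines

variable {𝕜 E F : Type*} [NontriviallyNormedField 𝕜]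
  [NormedAddCommGroup E] [NormedSpace 𝕜 E] [NormedAddCommGroup F] [NormedSpace 𝕜 F]

lemma hasFPowerSeriesAt_line {g : E → F} {p : FormalMultilinearSeries 𝕜 E F} {a : E}
    (h : HasFPowerSeriesAt g p a) (z : E) :
    HasFPowerSeriesAt (fun t : 𝕜 ↦ g (a + t • z)) (lineSeries p z) 0 := by
  let u : 𝕜 →L[𝕜] E := .toSpanSingleton 𝕜 z
  have hshift : HasFPowerSeriesAt (fun x ↦ g (a + x)) p (u 0) := by
    simpa [u, add_comm a] using h.comp_sub (-a)
  exact hshift.compContinuousLinearMap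

lemma factorial_smul_coeff_eq_iteratedDeriv [CompleteSpace F] {f : 𝕜 → F}
    {p : FormalMultilinearSeries 𝕜 𝕜 F} {x : 𝕜} (h : HasFPowerSeriesAt f p x) (k : ℕ) :
    k ! • p.coeff k = iteratedDeriv k f x := by
  obtain ⟨r, hr⟩ := h
  rw [iteratedDeriv_eq_iteratedFDeriv, ← hr.factorial_smul 1 k]
  rfl

lemma hasFPowerSeriesAt_of_factorial_smul_coeff_eq [CharZero 𝕜] [CompleteSpace F] {f : 𝕜 → F}
    {p : FormalMultilinearSeries 𝕜 𝕜 F} {x : 𝕜} (hf : AnalyticAt 𝕜 f x)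
    (hp : ∀ k, k ! • p.coeff k = iteratedDeriv k f x) : HasFPowerSeriesAt f p x := by
  obtain ⟨q, hq⟩ := hf
  suffices p = q by rwa [this]
  refine formalMultilinearSeries_ext_coeff fun k ↦ ?_
  have hk : (k ! : 𝕜) ≠ 0 := mod_cast k.factorial_ne_zero
  have hpq := (hp k).trans (factorial_smul_coeff_eq_iteratedDeriv hq k).symm
  rw [← Nat.cast_smul_eq_nsmul 𝕜, ← Nat.cast_smul_eq_nsmul 𝕜] at hpq
  exact smul_right_injective F hk hpq

lemma analyticAt_line {g : E → F} {a z : E} {y : 𝕜} (h : AnalyticAt 𝕜 g (a + y • z)) :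
    AnalyticAt 𝕜 (fun t : 𝕜 ↦ g (a + t • z)) y :=
  h.fun_comp (f := fun t : 𝕜 ↦ a + t • z) (by fun_prop)

lemma analyticAt_line_smul {g : E → F} {a z : E} {c y : 𝕜}
    (h : AnalyticAt 𝕜 (fun t : 𝕜 ↦ g (a + t • z)) (y * c)) :
    AnalyticAt 𝕜 (fun t : 𝕜 ↦ g (a + t • (c • z))) y := by
  simpa only [mul_smul] using h.fun_comp (f := fun t : 𝕜 ↦ t * c) (by fun_prop)

lemma analyticAt_line_of_eventually {g : E → F} {a : E}
    (h : ∀ᶠ z in 𝓝 (0 : E), AnalyticAt 𝕜 (fun t : 𝕜 ↦ g (a + t • z)) 0) (z : E) :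
    AnalyticAt 𝕜 (fun t : 𝕜 ↦ g (a + t • z)) 0 := by
  have hsmul : Tendsto (fun c : 𝕜 ↦ c • z) (𝓝[≠] 0) (𝓝 0) := by
    simpa using (tendsto_id.smul_const z : Tendsto (fun c : 𝕜 ↦ c • z) (𝓝 0) _).mono_left
      nhdsWithin_le_nhds
  obtain ⟨c, hc, (hc0 : c ≠ 0)⟩ := ((hsmul.eventually h).and self_mem_nhdsWithin).exists
  have hline := analyticAt_line_smul (c := c⁻¹) (y := 0) (by simpa using hc)
  rwa [inv_smul_smul₀ hc0] at hline

lemma eventually_analyticOnNhd_line {g : E → F} {a : E} {ε : ℝ} (hε : 0 < ε)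
    (h : ∀ z, ‖z‖ ≤ 1 → ∀ y ∈ ball (0 : 𝕜) ε, AnalyticAt 𝕜 (fun t : 𝕜 ↦ g (a + t • z)) y) :
    ∀ᶠ z in 𝓝 (0 : E), AnalyticOnNhd 𝕜 (fun t : 𝕜 ↦ g (a + t • z)) (closedBall 0 1) := by
  obtain ⟨c, hc, hcε⟩ := NormedField.exists_norm_lt 𝕜 hε
  filter_upwards [closedBall_mem_nhds 0 hc] with z hz t ht
  rw [mem_closedBall_zero_iff] at hz ht
  have hunit : ‖c⁻¹ • z‖ ≤ 1 := by
    rw [norm_smul, norm_inv]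
    exact inv_mul_le_one_of_le₀ hz (norm_nonneg c)
  have hball : t * c ∈ ball (0 : 𝕜) ε := by
    rw [mem_ball_zero_iff, norm_mul]
    exact (mul_le_of_le_one_left (norm_nonneg c) ht).trans_lt hcε
  simpa [smul_inv_smul₀ (norm_pos_iff.1 hc)] using analyticAt_line_smul (h _ hunit _ hball)

lemma exists_ball_analyticAt_line [CompleteSpace F] {U : Set E} (hU : IsOpen U) {g : E → F}
    {a : E} (ha : a ∈ U) (h : AnalyticAt 𝕜 g a) :
    ∃ ε : ℝ, 0 < ε ∧ ∀ z : E, ‖z‖ ≤ 1 → ∀ y ∈ ball (0 : 𝕜) ε,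
      a + y • z ∈ U ∧ AnalyticAt 𝕜 (fun t : 𝕜 ↦ g (a + t • z)) y := by
  obtain ⟨ε, hε, hball⟩ := Metric.eventually_nhds_iff_ball.1
    ((hU.eventually_mem ha).and h.eventually_analyticAt)
  refine ⟨ε, hε, fun z hz y hy ↦ ?_⟩
  have hmem : a + y • z ∈ ball a ε := by
    rw [mem_ball_zero_iff] at hy
    rw [mem_ball_iff_norm, add_sub_cancel_left]
    exact (norm_smul_le y z).trans (mul_le_of_le_one_right (norm_nonneg y) hz) |>.trans_lt hy
  exact ⟨(hball _ hmem).1, analyticAt_line (hball _ hmem).2⟩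

end Lines

section PowerSeriesOfLines

variable {𝕜 E F : Type*} [RCLike 𝕜]
  [NormedAddCommGroup E] [NormedSpace 𝕜 E] [NormedAddCommGroup F] [NormedSpace 𝕜 F]

lemma hasFPowerSeriesAt_of_lineSeries [CompleteSpace F] {g : E → F}
    {q : FormalMultilinearSeries 𝕜 E F} {a : E} (hq : 0 < q.radius)
    (hline : ∀ z, HasFPowerSeriesAt (fun t : 𝕜 ↦ g (a + t • z)) (lineSeries q z) 0)
    (hg : ∀ᶠ z in 𝓝 (0 : E),
      AnalyticOnNhd 𝕜 (fun t : 𝕜 ↦ g (a + t • z)) (closedBall 0 1)) :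
    HasFPowerSeriesAt g q a := by
  let s : E → F := fun x ↦ q.sum (x - a)
  have hs : HasFPowerSeriesAt s q a := by
    simpa using (q.hasFPowerSeriesOnBall hq).hasFPowerSeriesAt.comp_sub a
  have hball : ∀ᶠ z in 𝓝 (0 : E), ∀ t ∈ closedBall (0 : 𝕜) 1, AnalyticAt 𝕜 s (a + t • z) := by
    obtain ⟨δ, hδ, hsδ⟩ := Metric.eventually_nhds_iff_ball.1 hs.analyticAt.eventually_analyticAt
    filter_upwards [ball_mem_nhds 0 hδ] with z hz t ht
    refine hsδ _ ?_
    rw [mem_ball_iff_norm, add_sub_cancel_left]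
    rw [mem_closedBall_zero_iff] at ht
    rw [mem_ball_zero_iff] at hz
    exact (norm_smul_le t z).trans (mul_le_of_le_one_left (norm_nonneg z) ht) |>.trans_lt hz
  have heq : ∀ᶠ z in 𝓝 (0 : E), s (a + z) = g (a + z) := by
    filter_upwards [hg, hball] with z hgz hsz
    have hnear : (fun t : 𝕜 ↦ s (a + t • z)) =ᶠ[𝓝 0] fun t ↦ g (a + t • z) := by
      filter_upwards [(hasFPowerSeriesAt_line hs z).eventually_hasSum, (hline z).eventually_hasSum]
        with t hst hgt
      simpa using hst.unique hgt
    simpa using AnalyticOnNhd.eqOn_of_preconnected_of_eventuallyEq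
      (fun t ht ↦ analyticAt_line (hsz t ht)) hgz (convex_closedBall (0 : 𝕜) 1).isPreconnected
      (mem_closedBall_self zero_le_one) hnear (show (1 : 𝕜) ∈ closedBall 0 1 by simp)
  have hsub : Tendsto (fun x ↦ x - a) (𝓝 a) (𝓝 0) := by
    simpa using (continuous_id.sub continuous_const).tendsto (x := a) (f := fun x ↦ x - a)
  exact hs.congr <| (hsub.eventually heq).mono fun x hx ↦ by simpa using hx

theorem hasFPowerSeriesAt_symmetrizeSeries [CompleteSpace E] [CompleteSpace F] {g : E → F} {a : E}
    {p : FormalMultilinearSeries 𝕜 E F}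
    (hp : ∀ k z, k ! • p k (fun _ ↦ z) = iteratedDeriv k (fun t : 𝕜 ↦ g (a + t • z)) 0)
    (hg : ∀ᶠ z in 𝓝 (0 : E), AnalyticOnNhd 𝕜 (fun t : 𝕜 ↦ g (a + t • z)) (closedBall 0 1)) :
    HasFPowerSeriesAt g (symmetrizeSeries p) a := by
  have hg0 : ∀ᶠ z in 𝓝 (0 : E), AnalyticAt 𝕜 (fun t : 𝕜 ↦ g (a + t • z)) 0 :=
    hg.mono fun z hz ↦ hz 0 (mem_closedBall_self zero_le_one)
  have hline (z : E) : HasFPowerSeriesAt (fun t : 𝕜 ↦ g (a + t • z)) (lineSeries p z) 0 :=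
    hasFPowerSeriesAt_of_factorial_smul_coeff_eq (analyticAt_line_of_eventually hg0 z) fun k ↦ by
      rw [coeff_lineSeries, hp]
  refine hasFPowerSeriesAt_of_lineSeries (radius_symmetrizeSeries_pos fun z ↦ (hline z).radius_pos)
    (fun z ↦ ?_) hg
  rw [lineSeries_symmetrizeSeries]
  exact hline z

end PowerSeriesOfLines

section Gateaux

variable {𝕜 E F : Type*} [NontriviallyNormedField 𝕜]
  [NormedAddCommGroup E] [NormedSpace 𝕜 E] [NormedAddCommGroup F] [NormedSpace 𝕜 F]

variable (𝕜) in
/-- Gateaux differentiability of order `k` without coordinates: `g` is `C^k` at `a` along every line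
through `a`, and the `k`-th directional derivatives are the diagonal values of a single continuous
`k`-linear map, not required to be symmetric. -/
def IsGateauxContDiffAt (k : ℕ) (g : E → F) (a : E) : Prop :=
  (∀ z : E, ContDiffAt 𝕜 k (fun y : 𝕜 ↦ g (a + y • z)) 0) ∧
    ∃ p : E [×k]→L[𝕜] F, ∀ z : E, p (fun _ ↦ z) = iteratedDeriv k (fun y : 𝕜 ↦ g (a + y • z)) 0

lemma isGateauxContDiffAt_of_analyticAt [CompleteSpace F] {g : E → F} {a : E}
    (h : AnalyticAt 𝕜 g a) (k : ℕ) : IsGateauxContDiffAt 𝕜 k g a := by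
  refine ⟨fun z ↦ (analyticAt_line (by simpa using h)).contDiffAt, ?_⟩
  obtain ⟨p, hp⟩ := h
  refine ⟨k ! • p k, fun z ↦ ?_⟩
  rw [← factorial_smul_coeff_eq_iteratedDeriv (hasFPowerSeriesAt_line hp z), coeff_lineSeries]
  rfl

lemma exists_factorial_smul_diag_eq_iteratedDeriv [CharZero 𝕜] {g : E → F} {a : E}
    (h : ∀ k, 1 ≤ k → IsGateauxContDiffAt 𝕜 k g a) :
    ∃ p : FormalMultilinearSeries 𝕜 E F,
      ∀ k z, k ! • p k (fun _ ↦ z) = iteratedDeriv k (fun t : 𝕜 ↦ g (a + t • z)) 0 := by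
  suffices ∀ k, ∃ p : E [×k]→L[𝕜] F,
      ∀ z, k ! • p (fun _ ↦ z) = iteratedDeriv k (fun t : 𝕜 ↦ g (a + t • z)) 0 from
    Classical.skolem.1 this
  rintro (_ | k)
  · exact ⟨.constOfIsEmpty 𝕜 _ (g a), fun z ↦ by simp⟩
  · obtain ⟨-, p, hp⟩ := h (k + 1) k.succ_pos
    refine ⟨((k + 1)! : 𝕜)⁻¹ • p, fun z ↦ ?_⟩
    rw [← hp, ← Nat.cast_smul_eq_nsmul 𝕜]
    exact smul_inv_smul₀ (mod_cast (k + 1).factorial_ne_zero) _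

end Gateaux

theorem analyticAt_iff_Ginfty_and_analytic_on_lines_general {𝕜 E F : Type*} [RCLike 𝕜]
    [NormedAddCommGroup E] [NormedSpace 𝕜 E] [CompleteSpace E]
    [NormedAddCommGroup F] [NormedSpace 𝕜 F] [CompleteSpace F]
    {U : Set E} (hU : IsOpen U) {g : E → F} {a : E} (ha : a ∈ U) :
    AnalyticAt 𝕜 g a ↔
      (∀ k : ℕ, 1 ≤ k → IsGateauxContDiffAt 𝕜 k g a) ∧
        ∃ ε : ℝ, 0 < ε ∧ ∀ z : E, ‖z‖ ≤ 1 → ∀ y ∈ ball (0 : 𝕜) ε,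
          a + y • z ∈ U ∧ AnalyticAt 𝕜 (fun t : 𝕜 ↦ g (a + t • z)) y := by
  refine ⟨fun h ↦ ⟨fun k _ ↦ isGateauxContDiffAt_of_analyticAt h k,
    exists_ball_analyticAt_line hU ha h⟩, ?_⟩
  rintro ⟨hG, ε, hε, hline⟩
  obtain ⟨p, hp⟩ := exists_factorial_smul_diag_eq_iteratedDeriv hG
  exact (hasFPowerSeriesAt_symmetrizeSeries hp <|
    eventually_analyticOnNhd_line hε fun z hz y hy ↦ (hline z hz y hy).2).analyticAt

section HomogeneousPolynomials

lemma exists_prod_apply_eq_prod_pow {σ R : Type*} [CommMonoid R] {k : ℕ} {d : σ →₀ ℕ}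
    (hd : d.degree = k) :
    ∃ r : Fin k → σ, ∀ x : σ → R, ∏ i, x (r i) = d.prod fun i m ↦ x i ^ m := by
  obtain ⟨l, hl⟩ : ∃ l : List σ, (l : Multiset σ) = d.toMultiset := Quot.exists_rep d.toMultiset
  obtain rfl : l.length = k := by
    rw [← hd, ← Multiset.coe_card, hl, Finsupp.card_toMultiset]
    rfl
  classical
  refine ⟨l.get, fun x ↦ ?_⟩
  calc
    ∏ i, x (l.get i) = (d.toMultiset.map x).prod := by
      rw [← hl]
      exact Fin.prod_univ_fun_getElem l x
    _ = d.prod fun i m ↦ x i ^ m := by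
      rw [prod_multiset_map_count, Finsupp.toFinset_toMultiset]
      simp only [Finsupp.count_toMultiset]
      rfl

lemma exists_diag_eq_eval_of_isHomogeneous {R M ι : Type*} [CommSemiring R] [TopologicalSpace R]
    [IsTopologicalSemiring R] [AddCommMonoid M] [Module R M] [TopologicalSpace M]
    (l : ι → M →L[R] R) {P : MvPolynomial ι R} {k : ℕ} (hP : P.IsHomogeneous k) :
    ∃ p : M [×k]→L[R] R, ∀ z, p (fun _ ↦ z) = MvPolynomial.eval (fun i ↦ l i z) P := by
  have hmonomial (d : P.support) :
      ∃ r : Fin k → ι, ∀ x : ι → R, ∏ i, x (r i) = d.1.prod fun i m ↦ x i ^ m := by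
    refine exists_prod_apply_eq_prod_pow ?_
    rw [Finsupp.degree_eq_weight_one]
    exact hP (MvPolynomial.mem_support_iff.1 d.2)
  choose r hr using hmonomial
  refine ⟨∑ d : P.support, P.coeff d •
    (ContinuousMultilinearMap.mkPiAlgebra R (Fin k) R).compContinuousLinearMap fun i ↦ l (r d i),
    fun z ↦ ?_⟩
  simp only [_root_.sum_apply, _root_.smul_apply, MvPolynomial.eval_eq, smul_eq_mul,
    ContinuousMultilinearMap.compContinuousLinearMap_apply,
    ContinuousMultilinearMap.mkPiAlgebra_apply]
  rw [← sum_coe_sort P.support]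
  exact sum_congr rfl fun d _ ↦ congrArg (P.coeff d * ·) (hr d fun i ↦ l i z)

lemma exists_isHomogeneous_eval_repr_eq_diag {R M ι κ : Type*} [CommSemiring R] [AddCommMonoid M]
    [Module R M] [Finite ι] [Fintype κ] (b : Basis ι R M)
    (p : MultilinearMap R (fun _ : κ ↦ M) R) :
    ∃ P : MvPolynomial ι R, P.IsHomogeneous (Fintype.card κ) ∧
      ∀ z, MvPolynomial.eval (b.repr z) P = p (fun _ ↦ z) := by
  classical
  cases nonempty_fintype ι
  refine ⟨∑ r : κ → ι, MvPolynomial.C (p fun i ↦ b (r i)) * ∏ i, MvPolynomial.X (r i), ?_, ?_⟩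
  · refine .sum _ _ _ fun r _ ↦ ?_
    simpa using (MvPolynomial.isHomogeneous_C ι (p fun i ↦ b (r i))).mul <|
      .prod univ _ (fun _ ↦ 1) fun i _ ↦ MvPolynomial.isHomogeneous_X R (r i)
  · intro z
    conv_rhs => rw [← b.sum_repr z, p.map_sum]
    simp [p.map_smul_univ, mul_comm]

lemma isGk_iff_isGateauxContDiffAt {n k : ℕ} {g : EuclideanSpace ℝ (Fin n) → ℝ}
    {a : EuclideanSpace ℝ (Fin n)} : IsGk n k g a ↔ IsGateauxContDiffAt ℝ k g a := by
  refine and_congr_right fun _ ↦ ⟨?_, ?_⟩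
  · rintro ⟨P, hP, hval⟩
    obtain ⟨p, hp⟩ := exists_diag_eq_eval_of_isHomogeneous EuclideanSpace.proj hP
    exact ⟨p, fun z ↦ (hp z).trans (hval z)⟩
  · rintro ⟨p, hval⟩
    obtain ⟨P, hP, hp⟩ := exists_isHomogeneous_eval_repr_eq_diag
      (EuclideanSpace.basisFun (Fin n) ℝ).toBasis p.toMultilinearMap
    exact ⟨P, by simpa using hP, fun z ↦ (hp z).trans (hval z)⟩

end HomogeneousPolynomials

/-- Fact 3.5: Gateaux-differentiability characterization of real analyticity. -/
theorem analyticAt_iff_Ginfty_and_analytic_on_lines {n : ℕ}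
    (U : Set (EuclideanSpace ℝ (Fin n))) (hU : IsOpen U)
    (g : EuclideanSpace ℝ (Fin n) → ℝ) (a : EuclideanSpace ℝ (Fin n)) (ha : a ∈ U) :
    AnalyticAt ℝ g a ↔
      ((∀ k : ℕ, 1 ≤ k → IsGk n k g a) ∧
        ∃ ε : ℝ, 0 < ε ∧ ∀ z : EuclideanSpace ℝ (Fin n), ‖z‖ ≤ 1 →
          ∀ y ∈ Set.Ioo (-ε) ε,
            a + y • z ∈ U ∧ AnalyticAt ℝ (fun t : ℝ => g (a + t • z)) y) := by
  simpa only [isGk_iff_isGateauxContDiffAt, Real.ball_eq_Ioo, zero_sub, zero_add] using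
    analyticAt_iff_Ginfty_and_analytic_on_lines_general (𝕜 := ℝ) hU ha
end
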